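/- Define $u(z) = \left| \exp\left( \frac{z+1}{z-1} \right) \right|$ for $z$ in the unit disk $\mathbb{B}^2 \subset \mathbb{C}$, which is the distance of $f(z) = \exp((z+1)/(z-1))$ to the boundary of the punctured disk $\mathbb{B}^2 \setminus \{0\}$. Then for every $s$ with $1 - 1/e \leq s < 1$ and every constant $C \geq 1$, the function $u$ does NOT satisfy the $(s, C)$-Harnack inequality in $\mathbb{B}^2$: indeed, for $x_p = \frac{e^p-1}{e^p+1}$ with $p \in \mathbb{N}$, the point $x_{p+1}$ lies in the closed ball $\overline{B}^2(x_p, s(1-x_p))$, while $\frac{u(x_p)}{u(x_{p+1})} = \exp(e^{p+1} - e^p) \to \infty$ as $p \to \infty$. -/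

import Mathlib

open Metric Set Filter

/-- A continuous function `u : G → [0,∞)` on a plane domain `G ⊊ ℝ² ≅ ℂ` satisfies the
`(s, C)`-Harnack inequality in `G` if for every `x ∈ G` and every `r > 0` with
`B(x,r) ⊆ G`, one has `u z₁ ≤ C * u z₂` for all `z₁, z₂` in the closed ball `B̄(x, s r)`. -/
def SatisfiesHarnack (u : ℂ → ℝ) (G : Set ℂ) (s C : ℝ) : Prop :=
  ∀ x ∈ G, ∀ r > (0 : ℝ), ball x r ⊆ G →
    ∀ z₁ ∈ closedBall x (s * r), ∀ z₂ ∈ closedBall x (s * r), u z₁ ≤ C * u z₂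

/-- `u(z) = |exp((z+1)/(z-1))|`, the distance of `f(z) = exp((z+1)/(z-1))` to the boundary
of the punctured disk `𝔹² ∖ {0}`. -/
noncomputable def uSlit (z : ℂ) : ℝ := ‖Complex.exp ((z + 1) / (z - 1))‖

/-- The points `x_p = (eᵖ-1)/(eᵖ+1)` on the radius `(0,1)`. -/
noncomputable def xp (p : ℕ) : ℝ := (Real.exp p - 1) / (Real.exp p + 1)

/-!
The Cayley transform `w ↦ (w - 1) / (w + 1)` maps the right half-plane onto the unit disk and turns
`u` into `w ↦ exp (-Re w)`. The points `x_p` are the images of `eᵖ`. For `0 < a ≤ b` the image of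
`b` lies within `(1 - a / b) (1 - x)` of the image `x` of `a`, so the scale-invariant step from `eᵖ`
to `eᵖ⁺¹` stays in a Harnack ball with `s = 1 - 1 / e`, whereas `u` decreases by the unbounded
factor `exp (eᵖ⁺¹ - eᵖ)`.
-/

theorem not_satisfiesHarnack_of_tendsto_div_atTop {ι : Type*} {l : Filter ι} [l.NeBot]
    {u : ℂ → ℝ} {G : Set ℂ} {s : ℝ} {x y : ι → ℂ} {r : ι → ℝ} (hr : ∀ i, 0 < r i)
    (hG : ∀ i, ball (x i) (r i) ⊆ G) (hy : ∀ i, y i ∈ closedBall (x i) (s * r i))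
    (hu : ∀ i, 0 < u (y i)) (hxy : Tendsto (fun i ↦ u (x i) / u (y i)) l atTop) (C : ℝ) :
    ¬ SatisfiesHarnack u G s C := by
  intro harnack
  obtain ⟨i, hi⟩ := (hxy.eventually_gt_atTop C).exists
  have hx : x i ∈ closedBall (x i) (s * r i) :=
    mem_closedBall_self (nonneg_of_mem_closedBall (hy i))
  have hle : u (x i) ≤ C * u (y i) :=
    harnack (x i) (hG i (mem_ball_self (hr i))) (r i) (hr i) (hG i) _ hx _ (hy i)
  exact hle.not_gt ((lt_div_iff₀ (hu i)).1 hi)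

/-- The Cayley transform, in the normalization mapping the right half-plane onto the unit disk and
`∞` to `1`. It is defined over any field so that the real formulas and the complex ones share it. -/
def cayley {K : Type*} [Field K] (w : K) : K := (w - 1) / (w + 1)

section Field

variable {K : Type*} [Field K] {w : K}

theorem one_sub_cayley (hw : w + 1 ≠ 0) : 1 - cayley w = 2 / (w + 1) := by
  unfold cayley
  field_simp
  ring

theorem cayley_add_one_div_cayley_sub_one [NeZero (2 : K)] (hw : w + 1 ≠ 0) :
    (cayley w + 1) / (cayley w - 1) = -w := by
  have hadd : cayley w + 1 = 2 * w / (w + 1) := by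
    unfold cayley
    field_simp
    ring
  have hsub : cayley w - 1 = -(2 / (w + 1)) := by rw [← one_sub_cayley hw, neg_sub]
  rw [hadd, hsub, div_neg, div_div_div_cancel_right₀ hw, mul_div_cancel_left₀ w two_ne_zero]

end Field

theorem ofReal_cayley (a : ℝ) : ((cayley a : ℝ) : ℂ) = cayley (a : ℂ) := by
  simp only [cayley, Complex.ofReal_div, Complex.ofReal_sub, Complex.ofReal_add, Complex.ofReal_one]

theorem cayley_nonneg {a : ℝ} (ha : 1 ≤ a) : 0 ≤ cayley a :=
  div_nonneg (by linarith) (by linarith)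

theorem cayley_lt_one {a : ℝ} (ha : -1 < a) : cayley a < 1 :=
  (div_lt_one (by linarith)).2 (by linarith)

theorem dist_cayley_le {a b : ℝ} (ha : 0 < a) (hab : a ≤ b) :
    dist (cayley b) (cayley a) ≤ (1 - a / b) * (1 - cayley a) := by
  have hb : 0 < b := ha.trans_le hab
  have hsub : cayley b - cayley a = (b - a) / (b + 1) * (1 - cayley a) := by
    rw [one_sub_cayley (by positivity)]
    unfold cayley
    field_simp
    ring
  have hone : 0 ≤ 1 - cayley a := (sub_pos.2 (cayley_lt_one (neg_one_lt_zero.trans ha))).le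
  have hba : 0 ≤ b - a := sub_nonneg.2 hab
  calc dist (cayley b) (cayley a) = (b - a) / (b + 1) * (1 - cayley a) := by
        rw [Real.dist_eq, hsub,
            abs_of_nonneg (mul_nonneg (div_nonneg hba (by positivity)) hone)]
    _ ≤ (b - a) / b * (1 - cayley a) := by gcongr; linarith
    _ = (1 - a / b) * (1 - cayley a) := by rw [sub_div, div_self hb.ne']

theorem uSlit_pos (z : ℂ) : 0 < uSlit z := norm_pos_iff.2 (Complex.exp_ne_zero _)

theorem uSlit_cayley {w : ℂ} (hw : w + 1 ≠ 0) : uSlit (cayley w) = Real.exp (-w.re) := by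
  rw [uSlit, cayley_add_one_div_cayley_sub_one hw, Complex.norm_exp, Complex.neg_re]

theorem xp_eq_cayley (p : ℕ) : xp p = cayley (Real.exp p) := rfl

theorem xp_nonneg (p : ℕ) : 0 ≤ xp p := cayley_nonneg (Real.one_le_exp p.cast_nonneg)

theorem xp_lt_one (p : ℕ) : xp p < 1 := cayley_lt_one (neg_one_lt_zero.trans (Real.exp_pos p))

theorem ball_xp_subset_unitBall (p : ℕ) : ball (xp p : ℂ) (1 - xp p) ⊆ ball 0 1 :=
  ball_subset_ball' (by
    rw [dist_zero_right, Complex.norm_of_nonneg (xp_nonneg p), sub_add_cancel])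

theorem xp_succ_mem_closedBall {s : ℝ} (hs : 1 - 1 / Real.exp 1 ≤ s) (p : ℕ) :
    (xp (p + 1) : ℂ) ∈ closedBall (xp p : ℂ) (s * (1 - xp p)) := by
  have hratio : Real.exp p / Real.exp (p + 1 : ℕ) = 1 / Real.exp 1 := by
    rw [← Real.exp_sub, one_div, ← Real.exp_neg, Nat.cast_succ, sub_add_cancel_left]
  have hmono : Real.exp p ≤ Real.exp (p + 1 : ℕ) := Real.exp_le_exp.2 (by simp)
  rw [mem_closedBall, Complex.isometry_ofReal.dist_eq]
  calc dist (xp (p + 1)) (xp p) ≤ (1 - 1 / Real.exp 1) * (1 - xp p) :=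
        hratio ▸ dist_cayley_le (Real.exp_pos p) hmono
    _ ≤ s * (1 - xp p) := mul_le_mul_of_nonneg_right hs (sub_pos.2 (xp_lt_one p)).le

theorem uSlit_xp (p : ℕ) : uSlit (xp p) = Real.exp (-Real.exp p) := by
  have hne : (Real.exp p : ℂ) + 1 ≠ 0 := by exact_mod_cast (add_pos (Real.exp_pos p) one_pos).ne'
  rw [xp_eq_cayley, ofReal_cayley, uSlit_cayley hne, Complex.ofReal_re]

theorem uSlit_xp_div_uSlit_xp_succ (p : ℕ) :
    uSlit (xp p) / uSlit (xp (p + 1)) = Real.exp (Real.exp (p + 1) - Real.exp p) := by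
  rw [uSlit_xp, uSlit_xp, ← Real.exp_sub, neg_sub_neg, Nat.cast_succ]

theorem tendsto_exp_add_sub_exp_atTop {c : ℝ} (hc : 0 < c) :
    Tendsto (fun x : ℝ ↦ Real.exp (x + c) - Real.exp x) atTop atTop := by
  have hfactor (x : ℝ) : Real.exp (x + c) - Real.exp x = Real.exp x * (Real.exp c - 1) := by
    rw [Real.exp_add, mul_sub_one]
  simp only [hfactor]
  exact Real.tendsto_exp_atTop.atTop_mul_const (sub_pos.2 (Real.one_lt_exp_iff.2 hc))

theorem tendsto_uSlit_xp_div_uSlit_xp_succ_atTop :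
    Tendsto (fun p : ℕ ↦ uSlit (xp p) / uSlit (xp (p + 1))) atTop atTop := by
  simp only [uSlit_xp_div_uSlit_xp_succ]
  exact Real.tendsto_exp_atTop.comp
    ((tendsto_exp_add_sub_exp_atTop one_pos).comp tendsto_natCast_atTop_atTop)

/-- For every `s` with `1 - 1/e ≤ s < 1` and every `C ≥ 1`, the function
`u(z) = |exp((z+1)/(z-1))|` does NOT satisfy the `(s, C)`-Harnack inequality in `𝔹²`:
indeed `x_{p+1} ∈ B̄(x_p, s(1-x_p))` for all `p ∈ ℕ`, while
`u(x_p)/u(x_{p+1}) = exp(e^{p+1}-eᵖ) → ∞` as `p → ∞`. -/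
theorem stmt_16 (s C : ℝ) (hs₁ : 1 - 1 / Real.exp 1 ≤ s) (hs₂ : s < 1) (hC : 1 ≤ C) :
    ¬ SatisfiesHarnack uSlit (ball (0 : ℂ) 1) s C ∧
    (∀ p : ℕ, ((xp (p + 1) : ℝ) : ℂ) ∈ closedBall ((xp p : ℝ) : ℂ) (s * (1 - xp p))) ∧
    (∀ p : ℕ, uSlit (xp p) / uSlit (xp (p + 1)) =
      Real.exp (Real.exp (p + 1) - Real.exp p)) ∧
    Tendsto (fun p : ℕ => uSlit (xp p) / uSlit (xp (p + 1))) atTop atTop := by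
  have hmem := xp_succ_mem_closedBall hs₁
  have hlim := tendsto_uSlit_xp_div_uSlit_xp_succ_atTop
  refine ⟨?_, hmem, uSlit_xp_div_uSlit_xp_succ, hlim⟩
  exact not_satisfiesHarnack_of_tendsto_div_atTop (fun p ↦ sub_pos.2 (xp_lt_one p))
    ball_xp_subset_unitBall hmem (fun p ↦ uSlit_pos _) hlim C
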